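/- Let A be a 3×m binary array and let u be its upper-pair sequence. If u is ST-admissible, then no column j with 1 ≤ j ≤ m−2 is an RTIS center, regardless of the entries of the lower row A(2,·). -/

import Mathlib

namespace STLOCO

/-- Forbidden 2-tuples of `ST⁴`, read left-to-right. -/
def STpair (a b : Fin 4) : Prop :=
  (a = 0 ∧ b = 1) ∨ (a = 1 ∧ b = 0) ∨ (a = 1 ∧ b = 2) ∨
  (a = 2 ∧ b = 1) ∨ (a = 2 ∧ b = 3) ∨ (a = 3 ∧ b = 2)

/-- Forbidden 3-tuples of `ST⁴`, read left-to-right. -/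
def STtriple (a x b : Fin 4) : Prop :=
  (a = 0 ∧ x = 3 ∧ b = 0) ∨ (a = 3 ∧ x = 0 ∧ b = 3)

instance (a b : Fin 4) : Decidable (STpair a b) := by unfold STpair; infer_instance
instance (a x b : Fin 4) : Decidable (STtriple a x b) := by unfold STtriple; infer_instance

/-- A word `w : Fin m → Fin 4` (index `0` is the leftmost symbol) is ST-admissible. -/
def STadm {m : ℕ} (w : Fin m → Fin 4) : Prop :=
  (∀ i j : Fin m, (j : ℕ) = (i : ℕ) + 1 → ¬ STpair (w i) (w j)) ∧
  (∀ i j k : Fin m, (j : ℕ) = (i : ℕ) + 1 → (k : ℕ) = (i : ℕ) + 2 →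
    ¬ STtriple (w i) (w j) (w k))

instance {m : ℕ} : DecidablePred (@STadm m) := fun w => by
  unfold STadm; infer_instance

/-- Number of ST-admissible words of length `m`, with the convention `N4 0 = 2`. -/
def N4 (m : ℕ) : ℕ :=
  if m = 0 then 2
  else (Finset.univ.filter (fun w : Fin m → Fin 4 => STadm w)).card
/-- The upper-pair sequence of a `3 × m` binary array: `u j = 2·A(0,j) + A(1,j)`. -/
def upperPair {m : ℕ} (A : Fin 3 → Fin m → Fin 2) (j : Fin m) : Fin 4 :=
  ⟨2 * (A 0 j).val + (A 1 j).val, by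
    have h0 := (A 0 j).isLt; have h1 := (A 1 j).isLt; omega⟩

/-- Column `j` (with `1 ≤ j ≤ m − 2`) is an RTIS center if at least `3` of the four
entries `A(0,j), A(2,j), A(1,j−1), A(1,j+1)` equal `1 − A(1,j)`. -/
def isRTIScenter {m : ℕ} (A : Fin 3 → Fin m → Fin 2) (j : ℕ)
    (h1 : 1 ≤ j) (h2 : j + 2 ≤ m) : Prop :=
  3 ≤ ((if A 0 ⟨j, by omega⟩ = 1 - A 1 ⟨j, by omega⟩ then 1 else 0) +
       (if A 2 ⟨j, by omega⟩ = 1 - A 1 ⟨j, by omega⟩ then 1 else 0) +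
       (if A 1 ⟨j - 1, by omega⟩ = 1 - A 1 ⟨j, by omega⟩ then 1 else 0) +
       (if A 1 ⟨j + 1, by omega⟩ = 1 - A 1 ⟨j, by omega⟩ then 1 else 0) : ℕ)

/-!
The forbidden pairs are exactly the pairs of consecutive levels, so when the middle bit changes
between two adjacent columns, their levels must be `0` and `3` in some order, and in both columns
the upper bit equals the middle bit. At an RTIS center some horizontal neighbour of the middle bit
differs from it, so its upper neighbour does not. Hence the other three neighbours all differ from
it, and the three columns carry one of the forbidden triples `0, 3, 0` and `3, 0, 3`.
-/

theorem STpair_iff {a b : Fin 4} : STpair a b ↔ (b : ℕ) = a + 1 ∨ (a : ℕ) = b + 1 := by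
  revert a b
  decide

theorem bit_eq_one_sub_iff_ne {x y : Fin 2} : x = 1 - y ↔ x ≠ y := by
  revert x y
  decide

section UpperPair

variable {m : ℕ} {A : Fin 3 → Fin m → Fin 2} {i j k : Fin m}

theorem coe_upperPair : (upperPair A j : ℕ) = 2 * A 0 j + A 1 j := rfl

theorem upper_eq_middle_of_not_STpair (h : ¬ STpair (upperPair A i) (upperPair A j))
    (hne : A 1 i ≠ A 1 j) : A 0 i = A 1 i ∧ A 0 j = A 1 j := by
  simp only [STpair_iff, coe_upperPair] at h
  omega

theorem coe_upperPair_of_upper_eq_middle (h : A 0 j = A 1 j) :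
    (upperPair A j : ℕ) = 3 * A 1 j := by
  rw [coe_upperPair, h]
  ring

theorem STtriple_upperPair (hi : A 0 i = A 1 i) (hj : A 0 j = A 1 j) (hk : A 0 k = A 1 k)
    (hij : A 1 i ≠ A 1 j) (hkj : A 1 k ≠ A 1 j) :
    STtriple (upperPair A i) (upperPair A j) (upperPair A k) := by
  have hi' := coe_upperPair_of_upper_eq_middle hi
  have hj' := coe_upperPair_of_upper_eq_middle hj
  have hk' := coe_upperPair_of_upper_eq_middle hk
  unfold STtriple
  omega

end UpperPair

namespace isRTIScenter

variable {m : ℕ} {A : Fin 3 → Fin m → Fin 2} {j : ℕ} {h1 : 1 ≤ j} {h2 : j + 2 ≤ m}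

theorem left_ne_or_right_ne (h : isRTIScenter A j h1 h2) :
    A 1 ⟨j - 1, by omega⟩ ≠ A 1 ⟨j, by omega⟩ ∨ A 1 ⟨j + 1, by omega⟩ ≠ A 1 ⟨j, by omega⟩ := by
  simp only [isRTIScenter, bit_eq_one_sub_iff_ne] at h
  by_contra! h_eq
  simp only [h_eq] at h
  split_ifs at h <;> omega

theorem left_ne_and_right_ne_of_upper_eq_middle (h : isRTIScenter A j h1 h2)
    (h0 : A 0 ⟨j, by omega⟩ = A 1 ⟨j, by omega⟩) :
    A 1 ⟨j - 1, by omega⟩ ≠ A 1 ⟨j, by omega⟩ ∧ A 1 ⟨j + 1, by omega⟩ ≠ A 1 ⟨j, by omega⟩ := by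
  simp only [isRTIScenter, bit_eq_one_sub_iff_ne, h0] at h
  split_ifs at h <;> grind

end isRTIScenter

theorem st_admissible_no_rtis_center (m : ℕ) (A : Fin 3 → Fin m → Fin 2)
    (hA : STadm (fun j => upperPair A j)) :
    ∀ (j : ℕ) (h1 : 1 ≤ j) (h2 : j + 2 ≤ m), ¬ isRTIScenter A j h1 h2 := by
  intro j h1 h2 hcenter
  let l : Fin m := ⟨j - 1, by omega⟩
  let c : Fin m := ⟨j, by omega⟩
  let r : Fin m := ⟨j + 1, by omega⟩
  have hlc : (c : ℕ) = l + 1 := (Nat.sub_add_cancel h1).symm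
  have left (hne : A 1 l ≠ A 1 c) : A 0 l = A 1 l ∧ A 0 c = A 1 c :=
    upper_eq_middle_of_not_STpair (hA.1 l c hlc) hne
  have right (hne : A 1 r ≠ A 1 c) : A 0 c = A 1 c ∧ A 0 r = A 1 r :=
    upper_eq_middle_of_not_STpair (hA.1 c r rfl) hne.symm
  have hc : A 0 c = A 1 c :=
    hcenter.left_ne_or_right_ne.elim (fun hne => (left hne).2) (fun hne => (right hne).1)
  obtain ⟨hl, hr⟩ := hcenter.left_ne_and_right_ne_of_upper_eq_middle hc
  exact hA.2 l c r hlc (congrArg (· + 1) hlc)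
    (STtriple_upperPair (left hl).1 hc (right hr).2 hl hr)

end STLOCO
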